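/- Let Δ be the simplicial complex on vertex set {1,2,3,4,5,6} whose facets are {1,2,3}, {1,2,4}, {1,2,5}, {1,3,4}, {1,3,6}, {2,4,5}, {2,5,6}, {3,4,6}, {3,5,6}, {4,5,6}. Then M_1(Δ) ≤ 2 and M_0(Δ) ≥ 3; in particular M_1(Δ) < M_0(Δ). -/

import Mathlib

/-- A finite abstract simplicial complex on vertex set `ℕ`: a finite family of
finite sets (faces) closed under taking subsets. -/
structure SComplex where
  faces : Finset (Finset ℕ)
  down_closed : ∀ ⦃σ⦄, σ ∈ faces → ∀ ⦃τ⦄, τ ⊆ σ → τ ∈ faces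

namespace SComplex

/-- The vertex set of a simplicial complex. -/
def vertices (X : SComplex) : Finset ℕ := X.faces.sup id

/-- `σ` is a maximal face (facet) of `X`. -/
def IsMaximalFace (X : SComplex) (σ : Finset ℕ) : Prop :=
  σ ∈ X.faces ∧ ∀ τ ∈ X.faces, σ ⊆ τ → τ = σ

/-- `(γ, σ)` is a free pair: `σ` is the unique maximal face containing `γ`. -/
def IsFreePair (X : SComplex) (γ σ : Finset ℕ) : Prop :=
  γ ∈ X.faces ∧ X.IsMaximalFace σ ∧ γ ⊆ σ ∧
    ∀ τ, X.IsMaximalFace τ → γ ⊆ τ → τ = σ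

/-- The empty complex. -/
def empty : SComplex := ⟨∅, by intro σ h; simp at h⟩

/-- An elementary `d`-collapse from `X` to `Y`: there is a free pair `(γ, σ)`
with `|γ| ≤ d`, and `Y` is obtained from `X` by removing all faces `τ` with
`γ ⊆ τ ⊆ σ`. -/
def ElemCollapse (d : ℕ) (X Y : SComplex) : Prop :=
  ∃ γ σ, X.IsFreePair γ σ ∧ γ.card ≤ d ∧
    Y.faces = X.faces.filter fun τ => ¬ (γ ⊆ τ ∧ τ ⊆ σ)

/-- `X` is `d`-collapsible: some finite sequence of elementary `d`-collapses
reduces `X` to the empty complex. -/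
def Collapsible (d : ℕ) (X : SComplex) : Prop :=
  Relation.ReflTransGen (ElemCollapse d) X SComplex.empty

/-- The collapsibility number `C(X)`: the least `d` such that `X` is
`d`-collapsible. -/
noncomputable def collapsibility (X : SComplex) : ℕ :=
  sInf {d | X.Collapsible d}

/-- The link of a face `σ`. -/
def link (X : SComplex) (σ : Finset ℕ) : SComplex where
  faces := X.faces.filter fun τ => σ ∩ τ = ∅ ∧ σ ∪ τ ∈ X.faces
  down_closed := by
    intro τ hτ ρ hρ
    simp only [Finset.mem_filter] at hτ ⊢
    have h1 : σ ∩ ρ ⊆ σ ∩ τ := Finset.inter_subset_inter (le_refl σ) hρ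
    rw [hτ.2.1] at h1
    exact ⟨X.down_closed hτ.1 hρ, Finset.subset_empty.mp h1,
      X.down_closed hτ.2.2 (Finset.union_subset_union (le_refl σ) hρ)⟩

/-- The deletion of a face `σ`. -/
def del (X : SComplex) (σ : Finset ℕ) : SComplex where
  faces := X.faces.filter fun τ => ¬ σ ⊆ τ
  down_closed := by
    intro τ hτ ρ hρ
    simp only [Finset.mem_filter] at hτ ⊢
    exact ⟨X.down_closed hτ.1 hρ, fun hc => hτ.2 (hc.trans hρ)⟩

/-- The induced subcomplex `X[A]` on a set `A` of vertices. -/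
def induced (X : SComplex) (A : Finset ℕ) : SComplex where
  faces := X.faces.filter fun τ => τ ⊆ A
  down_closed := by
    intro τ hτ ρ hρ
    simp only [Finset.mem_filter] at hτ ⊢
    exact ⟨X.down_closed hτ.1 hρ, hρ.trans hτ.2⟩

end SComplex
namespace SComplex

instance : DecidableEq SComplex := fun X Y =>
  decidable_of_iff (X.faces = Y.faces) (by cases X; cases Y; simp)

lemma singleton_mem_faces {X : SComplex} {v : ℕ} (hv : v ∈ X.vertices) :
    ({v} : Finset ℕ) ∈ X.faces := by
  rw [vertices, Finset.mem_sup] at hv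
  obtain ⟨σ, hσ, hvσ⟩ := hv
  exact X.down_closed hσ (Finset.singleton_subset_iff.mpr hvσ)

lemma link_faces_card_lt {X : SComplex} {σ : Finset ℕ} (hσ : σ ∈ X.faces)
    (hne : σ.Nonempty) : (X.link σ).faces.card < X.faces.card := by
  refine Finset.card_lt_card
    ((Finset.ssubset_iff_of_subset (Finset.filter_subset _ _)).mpr ⟨σ, hσ, ?_⟩)
  simp only [Finset.mem_filter, Finset.inter_self]
  intro h
  exact hne.ne_empty h.2.1

lemma del_faces_card_lt {X : SComplex} {σ : Finset ℕ} (hσ : σ ∈ X.faces) :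
    (X.del σ).faces.card < X.faces.card := by
  refine Finset.card_lt_card
    ((Finset.ssubset_iff_of_subset (Finset.filter_subset _ _)).mpr ⟨σ, hσ, ?_⟩)
  simp [Finset.mem_filter]

/-- `X^o`: the set of vertices `v` of `X` with `lk(v, X) ≠ del(v, X)`. -/
def coreVertices (X : SComplex) : Finset ℕ :=
  X.vertices.filter fun v => X.link {v} ≠ X.del {v}

/-- The invariant `M(X)` of Biyikoğlu and Civan: `M(X) = 0` if `X^o = ∅`, and
`M(X) = min_{v ∈ X^o} max {M(lk(v, X)) + 1, M(del(v, X))}` otherwise. -/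
noncomputable def Mnum (X : SComplex) : ℕ :=
  if h : (coreVertices X).Nonempty then
    (coreVertices X).attach.inf' (Finset.attach_nonempty_iff.mpr h)
      (fun v => max (Mnum (X.link {v.1}) + 1) (Mnum (X.del {v.1})))
  else 0
termination_by X.faces.card
decreasing_by
  · exact link_faces_card_lt
      (singleton_mem_faces (Finset.mem_of_mem_filter _ v.2))
      (Finset.singleton_nonempty _)
  · exact del_faces_card_lt
      (singleton_mem_faces (Finset.mem_of_mem_filter _ v.2))

end SComplex
namespace SComplex

/-- `X_(k)^o`: the set of `k`-dimensional faces `σ` of `X` with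
`lk(σ, X) ≠ X[V(X) ∖ σ]`. -/
def kCore (X : SComplex) (k : ℕ) : Finset (Finset ℕ) :=
  X.faces.filter fun σ => σ.card = k + 1 ∧ X.link σ ≠ X.induced (X.vertices \ σ)

mutual

/-- `M'_k(X)`: equal to `M(X)` for `k = 0`; for `k ≥ 1` it is `M_{k-1}(X)` if
`X_(k)^o = ∅` and
`min_{σ ∈ X_(k)^o} max {M'_k(del(σ, X)), M'_k(lk(σ, X)) + k + 1}` otherwise. -/
noncomputable def Mk' : ℕ → SComplex → ℕ
  | 0, X => Mnum X
  | k + 1, X =>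
    if h : (X.kCore (k + 1)).Nonempty then
      (X.kCore (k + 1)).attach.inf' (Finset.attach_nonempty_iff.mpr h)
        (fun σ => max (Mk' (k + 1) (X.del σ.1)) (Mk' (k + 1) (X.link σ.1) + (k + 1) + 1))
    else Mk k X
termination_by k X => (k, X.faces.card, 0)
decreasing_by
  · apply Prod.Lex.right
    apply Prod.Lex.left
    exact del_faces_card_lt (Finset.mem_of_mem_filter _ σ.2)
  · apply Prod.Lex.right
    apply Prod.Lex.left
    have hc := (Finset.mem_filter.mp σ.2).2.1
    exact link_faces_card_lt (Finset.mem_of_mem_filter _ σ.2)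
      (Finset.card_pos.mp (by omega))
  · apply Prod.Lex.left; omega

/-- `M_k(X)`: `M_0(X) = M(X)` and `M_k(X) = min {M'_k(X), M_{k-1}(X)}`. -/
noncomputable def Mk : ℕ → SComplex → ℕ
  | 0, X => Mnum X
  | k + 1, X => min (Mk' (k + 1) X) (Mk k X)
termination_by k X => (k, X.faces.card, 1)
decreasing_by
  · apply Prod.Lex.right
    apply Prod.Lex.right
    omega
  · apply Prod.Lex.left; omega

end

end SComplex

/-- The ten facets of the complex `Δ` (Example V6F10-6 of Morton–Takahashi). -/
def deltaFacets : Finset (Finset ℕ) :=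
  {{1, 2, 3}, {1, 2, 4}, {1, 2, 5}, {1, 3, 4}, {1, 3, 6}, {2, 4, 5}, {2, 5, 6},
    {3, 4, 6}, {3, 5, 6}, {4, 5, 6}}

/-- The simplicial complex `Δ` on `{1, …, 6}` whose facets are `deltaFacets`:
its faces are exactly the subsets of these ten sets. -/
def Delta : SComplex where
  faces := deltaFacets.biUnion Finset.powerset
  down_closed := by
    intro σ hσ τ hτ
    simp only [Finset.mem_biUnion, Finset.mem_powerset] at hσ ⊢
    obtain ⟨f, hf, hσf⟩ := hσ
    exact ⟨f, hf, hτ.trans hσf⟩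

namespace SComplex

lemma le_Mnum_succ {X : SComplex} {d : ℕ} (hne : (coreVertices X).Nonempty)
    (h : ∀ v ∈ coreVertices X, d ≤ Mnum (X.link {v}) ∨ d + 1 ≤ Mnum (X.del {v})) :
    d + 1 ≤ Mnum X := by
  rw [Mnum, dif_pos hne]
  refine Finset.le_inf' _ _ fun v _ => ?_
  rcases h v.1 v.2 with h | h
  · exact le_max_of_le_left (by omega)
  · exact le_max_of_le_right h

lemma Mnum_le_of_mem {X : SComplex} {d v : ℕ} (hv : v ∈ coreVertices X)
    (h1 : Mnum (X.link {v}) + 1 ≤ d) (h2 : Mnum (X.del {v}) ≤ d) : Mnum X ≤ d := by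
  rw [Mnum, dif_pos ⟨v, hv⟩]
  exact (Finset.inf'_le _ (Finset.mem_attach _ ⟨v, hv⟩)).trans (max_le h1 h2)

lemma Mnum_eq_zero {X : SComplex} (h : coreVertices X = ∅) : Mnum X = 0 := by
  rw [Mnum, dif_neg (by simp [h])]

lemma Mk'_one_le_of_mem {X : SComplex} {d : ℕ} {σ : Finset ℕ} (hσ : σ ∈ X.kCore 1)
    (h1 : Mk' 1 (X.link σ) + 2 ≤ d) (h2 : Mk' 1 (X.del σ) ≤ d) : Mk' 1 X ≤ d := by
  rw [Mk', dif_pos ⟨σ, hσ⟩]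
  exact (Finset.inf'_le _ (Finset.mem_attach _ ⟨σ, hσ⟩)).trans (max_le h2 h1)

lemma Mk'_one_eq {X : SComplex} (h : X.kCore 1 = ∅) : Mk' 1 X = Mnum X := by
  rw [Mk', dif_neg (by simp [h]), Mk]

lemma mem_vertices {X : SComplex} {v : ℕ} : v ∈ X.vertices ↔ ({v} : Finset ℕ) ∈ X.faces := by
  refine ⟨singleton_mem_faces, fun h => ?_⟩
  rw [vertices, Finset.mem_sup]
  exact ⟨{v}, h, by simp⟩

lemma mem_link {X : SComplex} {σ τ : Finset ℕ} :
    τ ∈ (X.link σ).faces ↔ τ ∈ X.faces ∧ σ ∩ τ = ∅ ∧ σ ∪ τ ∈ X.faces := by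
  simp [link]

lemma mem_del {X : SComplex} {σ τ : Finset ℕ} :
    τ ∈ (X.del σ).faces ↔ τ ∈ X.faces ∧ ¬ σ ⊆ τ := by
  simp [del]

lemma ext_iff_faces {X Y : SComplex} : X = Y ↔ ∀ τ, τ ∈ X.faces ↔ τ ∈ Y.faces := by
  refine ⟨fun h τ => by rw [h], fun h => ?_⟩
  have hfaces : X.faces = Y.faces := Finset.ext h
  obtain ⟨F, hF⟩ := X
  obtain ⟨G, hG⟩ := Y
  change F = G at hfaces
  subst hfaces
  rfl

/-- A vertex `v` is in `X^o` as soon as some face avoiding `v` does not extend by `v`. -/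
lemma mem_core {X : SComplex} {v : ℕ} {τ : Finset ℕ} (hv : ({v} : Finset ℕ) ∈ X.faces)
    (hτ : τ ∈ X.faces) (hvτ : v ∉ τ) (h : insert v τ ∉ X.faces) : v ∈ coreVertices X := by
  rw [coreVertices, Finset.mem_filter]
  refine ⟨mem_vertices.mpr hv, fun heq => h ?_⟩
  have h2 : τ ∈ (X.del {v}).faces := mem_del.mpr ⟨hτ, by simpa using hvτ⟩
  rw [← heq] at h2
  rw [Finset.insert_eq]
  exact (mem_link.mp h2).2.2

/-- `M(X) ≥ 1` when `X` has a missing edge. -/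
lemma one_le_Mnum {X : SComplex} {a b : ℕ} (ha : ({a} : Finset ℕ) ∈ X.faces)
    (hb : ({b} : Finset ℕ) ∈ X.faces) (h : ({a, b} : Finset ℕ) ∉ X.faces) : 1 ≤ Mnum X := by
  refine le_Mnum_succ ⟨a, mem_core ha hb ?_ h⟩ fun _ _ => Or.inl (Nat.zero_le _)
  intro hab
  rw [Finset.mem_singleton] at hab
  subst hab
  exact h (by simpa using ha)

/-- `M(X) ≥ 2` when there is a nonempty set `S` of vertices such that the link of each of its
elements has a missing edge with both ends in `S`. -/
lemma two_le_Mnum : ∀ (n : ℕ) (X : SComplex), X.faces.card ≤ n → ∀ S : Finset ℕ, S.Nonempty →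
    (∀ u ∈ S, ∃ a ∈ S, ∃ b ∈ S, ({u, a} : Finset ℕ) ∈ X.faces ∧ ({u, b} : Finset ℕ) ∈ X.faces ∧
      ({u, a, b} : Finset ℕ) ∉ X.faces) → 2 ≤ Mnum X := by
  intro n
  induction n with
  | zero =>
    intro X hX S hS h
    obtain ⟨u, hu⟩ := hS
    obtain ⟨a, -, b, -, h1, -⟩ := h u hu
    simp only [nonpos_iff_eq_zero, Finset.card_eq_zero] at hX
    simp [hX] at h1
  | succ n ih =>
    intro X hX S hS h
    refine le_Mnum_succ ?_ fun v hv => ?_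
    · obtain ⟨u, hu⟩ := hS
      obtain ⟨a, -, b, -, h1, h2, h3⟩ := h u hu
      have hu' : ({u} : Finset ℕ) ∈ X.faces := X.down_closed h1 (by simp)
      have ha' : ({a} : Finset ℕ) ∈ X.faces := X.down_closed h1 (by simp)
      have hb' : ({b} : Finset ℕ) ∈ X.faces := X.down_closed h2 (by simp)
      have hua : u ≠ a := by rintro rfl; exact h3 (by simpa using h2)
      have hub : u ≠ b := by rintro rfl; exact h3 (by rwa [Finset.pair_comm a u, Finset.insert_idem])
      have hab : a ≠ b := by rintro rfl; exact h3 (by simpa using h2)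
      by_cases hf : ({a, b} : Finset ℕ) ∈ X.faces
      · exact ⟨u, mem_core hu' hf (by simp [hua, hub]) h3⟩
      · exact ⟨a, mem_core ha' hb' (by simp [hab]) hf⟩
    · have hvX := singleton_mem_faces (Finset.mem_of_mem_filter _ hv)
      by_cases hvS : v ∈ S
      · left
        obtain ⟨a, -, b, -, h1, h2, h3⟩ := h v hvS
        have hua : v ≠ a := by rintro rfl; exact h3 (by simpa using h2)
        have hub : v ≠ b := by
          rintro rfl; exact h3 (by rwa [Finset.pair_comm a v, Finset.insert_idem])
        refine one_le_Mnum (a := a) (b := b) (mem_link.mpr ⟨X.down_closed h1 (by simp), ?_, h1⟩)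
          (mem_link.mpr ⟨X.down_closed h2 (by simp), ?_, h2⟩) fun hc => h3 (mem_link.mp hc).2.2
        · rw [← Finset.disjoint_iff_inter_eq_empty]; simpa using hua
        · rw [← Finset.disjoint_iff_inter_eq_empty]; simpa using hub
      · right
        refine ih (X.del {v}) (by have := del_faces_card_lt hvX; omega) S hS fun u hu => ?_
        obtain ⟨a, ha, b, hb, h1, h2, h3⟩ := h u hu
        have hvu : v ≠ u := by rintro rfl; exact hvS hu
        have hva : v ≠ a := by rintro rfl; exact hvS ha
        have hvb : v ≠ b := by rintro rfl; exact hvS hb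
        exact ⟨a, ha, b, hb, mem_del.mpr ⟨h1, by simp [hvu, hva]⟩,
          mem_del.mpr ⟨h2, by simp [hvu, hvb]⟩, fun hc => h3 (mem_del.mp hc).1⟩

/-- `M(X) ≤ dim X + 1`. -/
lemma Mnum_le_of_card : ∀ (n : ℕ) (X : SComplex), X.faces.card ≤ n → ∀ d : ℕ,
    (∀ τ ∈ X.faces, τ.card ≤ d) → Mnum X ≤ d := by
  intro n
  induction n with
  | zero =>
    intro X hX d _
    have : coreVertices X = ∅ := by
      simp only [nonpos_iff_eq_zero, Finset.card_eq_zero] at hX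
      simp [coreVertices, vertices, hX]
    simp [Mnum_eq_zero this]
  | succ n ih =>
    intro X hX d hd
    rcases (coreVertices X).eq_empty_or_nonempty with h | ⟨v, hv⟩
    · simp [Mnum_eq_zero h]
    · have hvX := singleton_mem_faces (Finset.mem_of_mem_filter _ hv)
      have h1 := hd _ hvX
      rw [Finset.card_singleton] at h1
      refine Mnum_le_of_mem hv ?_ ?_
      · have := ih (X.link {v})
          (by have := link_faces_card_lt hvX (Finset.singleton_nonempty v); omega) (d - 1) ?_
        · omega
        · intro τ hτ
          obtain ⟨-, h2, h3⟩ := mem_link.mp hτ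
          have := hd _ h3
          rw [Finset.card_union_of_disjoint (Finset.disjoint_iff_inter_eq_empty.mpr h2),
            Finset.card_singleton] at this
          omega
      · exact ih (X.del {v}) (by have := del_faces_card_lt hvX; omega) d
          fun τ hτ => hd τ (mem_del.mp hτ).1

/-- `M'_1` vanishes on a simplex. -/
lemma Mk'_one_simplex {X : SComplex} {t : Finset ℕ} (ht : ∀ τ, τ ∈ X.faces ↔ τ ⊆ t) :
    Mk' 1 X = 0 := by
  have hv : X.vertices ⊆ t := fun v hv => by
    simpa using (ht _).mp (singleton_mem_faces hv)
  have h1 : X.kCore 1 = ∅ := by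
    refine Finset.filter_eq_empty_iff.mpr fun σ hσ hc => hc.2 (ext_iff_faces.mpr fun τ => ?_)
    rw [mem_link, induced, Finset.mem_filter, and_congr_right_iff]
    intro hτ
    constructor
    · rintro ⟨h1, -⟩ x hx
      refine Finset.mem_sdiff.mpr ⟨mem_vertices.mpr (X.down_closed hτ (by simpa using hx)), ?_⟩
      intro hxσ
      have : x ∈ σ ∩ τ := Finset.mem_inter.mpr ⟨hxσ, hx⟩
      simp [h1] at this
    · intro h
      refine ⟨Finset.disjoint_iff_inter_eq_empty.mp ?_,
        (ht _).mpr (Finset.union_subset ((ht _).mp hσ) ((ht _).mp hτ))⟩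
      exact (Finset.disjoint_of_subset_left h Finset.sdiff_disjoint).symm
  have h2 : coreVertices X = ∅ := by
    refine Finset.filter_eq_empty_iff.mpr fun v hv' hc => hc (ext_iff_faces.mpr fun τ => ?_)
    rw [mem_link, mem_del, and_congr_right_iff]
    intro hτ
    have h3 : ({v} : Finset ℕ) ∪ τ ∈ X.faces := (ht _).mpr
      (Finset.union_subset (by simpa using hv hv') ((ht _).mp hτ))
    simp only [h3, and_true, Finset.singleton_subset_iff]
    rw [← Finset.disjoint_iff_inter_eq_empty, Finset.disjoint_singleton_left]
  rw [Mk'_one_eq h1, Mnum_eq_zero h2]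

/-- Removing an edge of `X_(1)^o` whose link is a simplex. -/
lemma Mk'_one_step {X : SComplex} {e t : Finset ℕ} (he : e ∈ X.kCore 1)
    (het : e ∩ t = ∅) (ht : e ∪ t ∈ X.faces) (hmax : ∀ τ ∈ X.faces, e ⊆ τ → τ ⊆ e ∪ t)
    (hdel : Mk' 1 (X.del e) ≤ 2) : Mk' 1 X ≤ 2 := by
  refine Mk'_one_le_of_mem he ?_ hdel
  rw [Mk'_one_simplex (t := t)]
  intro τ
  rw [mem_link]
  constructor
  · rintro ⟨-, h1, h2⟩ x hx
    have := hmax _ h2 Finset.subset_union_left (Finset.mem_union_right _ hx)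
    rcases Finset.mem_union.mp this with h | h
    · have : x ∈ e ∩ τ := Finset.mem_inter.mpr ⟨h, hx⟩
      simp [h1] at this
    · exact h
  · intro h
    exact ⟨X.down_closed ht (h.trans Finset.subset_union_right),
      Finset.subset_empty.mp (het ▸ Finset.inter_subset_inter_left h),
      X.down_closed ht (Finset.union_subset_union_right h)⟩

/-- `M'_1(X) ≤ 2` for complexes of dimension at most one. -/
lemma Mk'_one_le_of_card : ∀ (n : ℕ) (X : SComplex), X.faces.card ≤ n →
    (∀ τ ∈ X.faces, τ.card ≤ 2) → Mk' 1 X ≤ 2 := by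
  intro n
  induction n with
  | zero =>
    intro X hX hd
    have : X.kCore 1 = ∅ := by
      simp only [nonpos_iff_eq_zero, Finset.card_eq_zero] at hX
      simp [kCore, hX]
    rw [Mk'_one_eq this]
    exact Mnum_le_of_card _ X le_rfl 2 hd
  | succ n ih =>
    intro X hX hd
    rcases (X.kCore 1).eq_empty_or_nonempty with h | ⟨e, he⟩
    · rw [Mk'_one_eq h]
      exact Mnum_le_of_card _ X le_rfl 2 hd
    · have heX := Finset.mem_of_mem_filter _ he
      have hc := (Finset.mem_filter.mp he).2.1
      refine Mk'_one_step (t := ∅) he (by simp) (by simpa using heX) (fun τ hτ h => ?_)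
        (ih (X.del e) (by have := del_faces_card_lt heX; omega)
          fun τ hτ => hd τ (mem_del.mp hτ).1)
      rw [Finset.eq_of_subset_of_card_le h (by have := hd τ hτ; omega)]
      simp

end SComplex

open SComplex

lemma mem_Delta {τ : Finset ℕ} : τ ∈ Delta.faces ↔ ∃ f ∈ deltaFacets, τ ⊆ f := by
  simp [Delta]

lemma card_deltaFacets : ∀ f ∈ deltaFacets, f.card = 3 := by decide

/-- A certificate that the complex obtained from `Δ` by deleting the edges of `l` has `M'_1 ≤ 2`.
Entries `(e, t, w)`: the edge `e` to be removed, the only vertex `t` of its current link,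
and a vertex `w` not in that link. -/
def cert : List (Finset ℕ) → List (Finset ℕ × ℕ × ℕ) → Prop
  | l, [] => ∀ f ∈ deltaFacets, ∃ σ ∈ l, σ ⊆ f
  | l, (e, t, w) :: r => (e.card = 2 ∧ t ∉ e ∧ w ∉ e ∧ (∃ f ∈ deltaFacets, e ∪ {t} ⊆ f) ∧
      (∀ σ ∈ l, ¬ σ ⊆ e ∪ {t}) ∧ (∃ f ∈ deltaFacets, {w} ⊆ f) ∧ (∀ σ ∈ l, ¬ σ ⊆ {w}) ∧
      (∀ f ∈ deltaFacets, ¬ e ∪ {w} ⊆ f) ∧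
      (∀ f ∈ deltaFacets, e ⊆ f → f ⊆ e ∪ {t} ∨ ∃ σ ∈ l, σ ⊆ f)) ∧ cert (e :: l) r

lemma cert_sound : ∀ (r : List (Finset ℕ × ℕ × ℕ)) (l : List (Finset ℕ)) (X : SComplex),
    (∀ τ, τ ∈ X.faces ↔ τ ∈ Delta.faces ∧ ∀ σ ∈ l, ¬ σ ⊆ τ) → cert l r → Mk' 1 X ≤ 2
  | [], l, X, hX, h => by
    refine Mk'_one_le_of_card _ X le_rfl fun τ hτ => ?_
    obtain ⟨h1, h2⟩ := (hX τ).mp hτ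
    obtain ⟨f, hf, hτf⟩ := mem_Delta.mp h1
    by_contra hc
    have := Finset.eq_of_subset_of_card_le hτf (by have := card_deltaFacets f hf; omega)
    subst this
    obtain ⟨σ, hσ, hs⟩ := h _ hf
    exact h2 σ hσ hs
  | (e, t, w) :: r, l, X, hX, h => by
    obtain ⟨⟨hc, hte, hwe, htX, htl, hwX, hwl, hw, hmax⟩, hr⟩ := h
    have ht : e ∪ {t} ∈ X.faces := (hX _).mpr ⟨mem_Delta.mpr htX, htl⟩
    have hw1 : ({w} : Finset ℕ) ∈ X.faces := (hX _).mpr ⟨mem_Delta.mpr hwX, hwl⟩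
    have hw2 : e ∪ {w} ∉ X.faces := fun hh => by
      obtain ⟨f, hf, hs⟩ := mem_Delta.mp ((hX _).mp hh).1
      exact hw f hf hs
    have he : e ∈ X.kCore 1 := by
      rw [kCore, Finset.mem_filter]
      refine ⟨X.down_closed ht Finset.subset_union_left, hc, fun heq => hw2 ?_⟩
      have : ({w} : Finset ℕ) ∈ (X.induced (X.vertices \ e)).faces := by
        rw [induced, Finset.mem_filter]
        exact ⟨hw1, by simpa [hwe] using mem_vertices.mpr hw1⟩
      rw [← heq] at this
      exact (mem_link.mp this).2.2
    refine Mk'_one_step (t := {t}) he (by rw [← Finset.disjoint_iff_inter_eq_empty]; simpa using hte) ht (fun τ hτ heτ => ?_)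
      (cert_sound r (e :: l) (X.del e) (fun τ => ?_) hr)
    · obtain ⟨h1, h2⟩ := (hX τ).mp hτ
      obtain ⟨f, hf, hτf⟩ := mem_Delta.mp h1
      rcases hmax f hf (heτ.trans hτf) with h | ⟨σ, hσ, hs⟩
      · exact hτf.trans h
      · have hτ2 : τ.card ≤ 2 := by
          by_contra hcon
          have := Finset.eq_of_subset_of_card_le hτf (by have := card_deltaFacets f hf; omega)
          subst this
          exact h2 σ hσ hs
        rw [← Finset.eq_of_subset_of_card_le heτ (by omega)]
        exact Finset.subset_union_left
    · rw [mem_del, hX]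
      simp only [List.mem_cons, forall_eq_or_imp]
      tauto

lemma Delta_upper : Mk' 1 Delta ≤ 2 := by
  refine cert_sound [({1, 5}, 2, 3), ({1, 6}, 3, 2), ({2, 3}, 1, 4), ({1, 2}, 4, 6),
    ({1, 3}, 4, 5), ({2, 4}, 5, 3), ({2, 5}, 6, 3), ({3, 4}, 6, 2), ({3, 5}, 6, 1),
    ({4, 5}, 6, 1)] [] Delta (by simp) ?_
  simp only [cert]
  refine ⟨by decide, by decide, by decide, by decide, by decide, by decide, by decide, by decide,
    by decide, by decide, by decide⟩

/-- A set of vertices spanning a cycle in the link of each vertex of `Δ`. -/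
def cyc : ℕ → Finset ℕ
  | 1 => {2, 3, 4}
  | 2 => {1, 4, 5}
  | 3 => {1, 4, 6}
  | 4 => {1, 2, 3, 5, 6}
  | 5 => {2, 4, 6}
  | 6 => {3, 4, 5}
  | _ => ∅

lemma cyc_spec : ∀ v ∈ ({1, 2, 3, 4, 5, 6} : Finset ℕ), (cyc v).Nonempty ∧ v ∉ cyc v ∧
    ∀ u ∈ cyc v, ∃ a ∈ cyc v, ∃ b ∈ cyc v, (∃ f ∈ deltaFacets, {v, u, a} ⊆ f) ∧
      (∃ f ∈ deltaFacets, {v, u, b} ⊆ f) ∧ ¬ (∃ f ∈ deltaFacets, {v, u, a, b} ⊆ f) := by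
  decide

lemma Delta_lower : 3 ≤ Mnum Delta := by
  have h6 : ∀ f ∈ deltaFacets, f ⊆ {1, 2, 3, 4, 5, 6} := by decide
  refine le_Mnum_succ ⟨1, mem_core (τ := {2, 6}) ?_ ?_ ?_ ?_⟩ fun v hv => Or.inl ?_
  · rw [mem_Delta]; decide
  · rw [mem_Delta]; decide
  · decide
  · rw [mem_Delta]; decide
  · have hv1 := singleton_mem_faces (Finset.mem_of_mem_filter _ hv)
    obtain ⟨f, hf, hvf⟩ := mem_Delta.mp hv1
    obtain ⟨hne, hvn, hS⟩ := cyc_spec v (by simpa using hvf.trans (h6 f hf))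
    refine two_le_Mnum _ (Delta.link {v}) le_rfl (cyc v) hne fun u hu => ?_
    obtain ⟨a, ha, b, hb, h1, h2, h3⟩ := hS u hu
    rw [← mem_Delta] at h1 h2 h3
    have hvu : v ≠ u := by rintro rfl; exact hvn hu
    have hva : v ≠ a := by rintro rfl; exact hvn ha
    have hvb : v ≠ b := by rintro rfl; exact hvn hb
    refine ⟨a, ha, b, hb, mem_link.mpr ⟨Delta.down_closed h1 (by simp), ?_, h1⟩,
      mem_link.mpr ⟨Delta.down_closed h2 (by simp), ?_, h2⟩, fun hc => h3 (mem_link.mp hc).2.2⟩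
    · rw [← Finset.disjoint_iff_inter_eq_empty]; simp [hvu, hva]
    · rw [← Finset.disjoint_iff_inter_eq_empty]; simp [hvu, hvb]

/-- For the complex `Δ` above, `M_1(Δ) ≤ 2` and `M_0(Δ) ≥ 3`;
in particular `M_1(Δ) < M_0(Δ)`. -/
theorem M1_lt_M0_Delta :
    SComplex.Mk 1 Delta ≤ 2 ∧ 3 ≤ SComplex.Mk 0 Delta ∧
      SComplex.Mk 1 Delta < SComplex.Mk 0 Delta := by
  have h1 : SComplex.Mk 1 Delta ≤ 2 := by
    rw [SComplex.Mk]
    exact (min_le_left _ _).trans Delta_upper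
  have h0 : 3 ≤ SComplex.Mk 0 Delta := by
    rw [SComplex.Mk]
    exact Delta_lower
  exact ⟨h1, h0, by omega⟩
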